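/- Let E>0 and g_l>0, and define λ̃(x) = (E·g_l)²·(g_l − x)/(x + g_l)³ for x ≥ g_l (equivalently, λ̃(x) = v(x)² − 2·v(x)²·x/(x+g_l) with v(x) = E·g_l/(x+g_l)). Then λ̃ is strictly decreasing on [g_l, 2g_l], strictly increasing on [2g_l, ∞), λ̃(g_l) = 0, λ̃(x) → 0 as x → ∞, and λ̃ attains its minimum over [g_l, ∞) at x = 2g_l with minimum value λ̃(2g_l) = −E²/27. -/

import Mathlib

/-!
The derivative `2 * (E * gl) ^ 2 * (x - 2 * gl) / (x + gl) ^ 4` changes sign exactly at `2 * gl`,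
which gives the two monotonicity claims. The minimum is visible in closed form, since
the critical point is a double root of the gap:
`λ̃(x) + E ^ 2 / 27 = E ^ 2 * (x - 2 * gl) ^ 2 * (x + 7 * gl) / (27 * (x + gl) ^ 3)`.
In the variable `u = (x + gl)⁻¹` the function is a polynomial without constant term, so it tends
to `0` at infinity.
-/

open Filter Set Topology

/-- The load voltage `v(x)` of the star network with source voltage `E`, line conductance `gl` and
total load conductance `x`. -/
noncomputable def loadVoltage (E gl x : ℝ) : ℝ :=
  E * gl / (x + gl)

/-- The Jacobian eigenvalue function `λ̃(x)` of the star network, in its explicit rational form;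
`loadEigenvalue_eq_loadVoltage` relates it to the load voltage. Its value at the pole `x = -gl` is
the junk value `0`. -/
noncomputable def loadEigenvalue (E gl x : ℝ) : ℝ :=
  (E * gl) ^ 2 * (gl - x) / (x + gl) ^ 3

section LoadEigenvalue

variable {E gl x : ℝ}

theorem loadEigenvalue_eq_loadVoltage (hx : x + gl ≠ 0) :
    loadEigenvalue E gl x =
      loadVoltage E gl x ^ 2 - 2 * loadVoltage E gl x ^ 2 * x / (x + gl) := by
  unfold loadEigenvalue loadVoltage
  field_simp
  ring

theorem loadEigenvalue_eq_inv (hx : x + gl ≠ 0) :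
    loadEigenvalue E gl x =
      (E * gl) ^ 2 * (2 * gl * (x + gl)⁻¹ ^ 3 - (x + gl)⁻¹ ^ 2) := by
  unfold loadEigenvalue
  field_simp
  ring

theorem loadEigenvalue_add_sq_div (hx : x + gl ≠ 0) :
    loadEigenvalue E gl x + E ^ 2 / 27 =
      E ^ 2 * (x - 2 * gl) ^ 2 * (x + 7 * gl) / (27 * (x + gl) ^ 3) := by
  unfold loadEigenvalue
  field_simp
  ring

theorem loadEigenvalue_self (E gl : ℝ) : loadEigenvalue E gl gl = 0 := by
  simp [loadEigenvalue]

theorem loadEigenvalue_two_mul (hgl : gl ≠ 0) : loadEigenvalue E gl (2 * gl) = -E ^ 2 / 27 := by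
  have hpole : 2 * gl + gl ≠ 0 := by
    rw [← add_one_mul]
    positivity
  linear_combination loadEigenvalue_add_sq_div (E := E) hpole

theorem neg_sq_div_le_loadEigenvalue (hgl : 0 ≤ gl) (hx : -gl < x) :
    -E ^ 2 / 27 ≤ loadEigenvalue E gl x := by
  have hpole : 0 < x + gl := by linarith
  have hroot : 0 ≤ x + 7 * gl := by linarith
  have hgap : 0 ≤ loadEigenvalue E gl x + E ^ 2 / 27 := by
    rw [loadEigenvalue_add_sq_div hpole.ne']
    positivity
  linarith

theorem isMinOn_loadEigenvalue (hgl : 0 < gl) :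
    IsMinOn (loadEigenvalue E gl) (Ioi (-gl)) (2 * gl) := fun _ hx =>
  (loadEigenvalue_two_mul hgl.ne').trans_le (neg_sq_div_le_loadEigenvalue hgl.le hx)

theorem hasDerivAt_loadEigenvalue (hx : x + gl ≠ 0) :
    HasDerivAt (loadEigenvalue E gl) (2 * (E * gl) ^ 2 * (x - 2 * gl) / (x + gl) ^ 4) x := by
  have hnum := ((hasDerivAt_id' x).const_sub gl).const_mul ((E * gl) ^ 2)
  have hden := ((hasDerivAt_id' x).add_const gl).fun_pow 3
  refine (hnum.fun_div hden (pow_ne_zero 3 hx)).congr_deriv ?_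
  field_simp
  ring

theorem continuousOn_loadEigenvalue (E gl : ℝ) :
    ContinuousOn (loadEigenvalue E gl) (Ioi (-gl)) := fun x hx =>
  have hpole : x + gl ≠ 0 := (neg_lt_iff_pos_add.1 hx).ne'
  (hasDerivAt_loadEigenvalue hpole).continuousAt.continuousWithinAt

theorem strictAntiOn_loadEigenvalue (hE : E ≠ 0) :
    StrictAntiOn (loadEigenvalue E gl) (Ioc (-gl) (2 * gl)) := by
  refine strictAntiOn_of_deriv_neg (convex_Ioc _ _)
    ((continuousOn_loadEigenvalue E gl).mono Ioc_subset_Ioi_self) fun x hx => ?_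
  rw [interior_Ioc] at hx
  have hgl : 0 < gl := by linarith [hx.1, hx.2]
  have hpole : 0 < x + gl := neg_lt_iff_pos_add.1 hx.1
  rw [(hasDerivAt_loadEigenvalue hpole.ne').deriv]
  exact div_neg_of_neg_of_pos (mul_neg_of_pos_of_neg (by positivity) (sub_neg.2 hx.2))
    (by positivity)

theorem strictMonoOn_loadEigenvalue (hE : E ≠ 0) (hgl : 0 < gl) :
    StrictMonoOn (loadEigenvalue E gl) (Ici (2 * gl)) := by
  have hsub : Ici (2 * gl) ⊆ Ioi (-gl) := Ici_subset_Ioi.2 (by linarith)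
  refine strictMonoOn_of_deriv_pos (convex_Ici _)
    ((continuousOn_loadEigenvalue E gl).mono hsub) fun x hx => ?_
  have hpole : 0 < x + gl := neg_lt_iff_pos_add.1 (hsub (interior_subset hx))
  rw [interior_Ici, mem_Ioi, ← sub_pos] at hx
  rw [(hasDerivAt_loadEigenvalue hpole.ne').deriv]
  positivity

theorem tendsto_loadEigenvalue_atTop (E gl : ℝ) :
    Tendsto (loadEigenvalue E gl) atTop (𝓝 0) := by
  have hinv : Tendsto (fun x : ℝ => (x + gl)⁻¹) atTop (𝓝 0) :=
    tendsto_inv_atTop_zero.comp (tendsto_atTop_add_const_right _ gl tendsto_id)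
  have hpoly : Tendsto (fun u : ℝ => (E * gl) ^ 2 * (2 * gl * u ^ 3 - u ^ 2)) (𝓝 0) (𝓝 0) :=
    Continuous.tendsto' (by fun_prop) 0 0 (by ring)
  refine (hpoly.comp hinv).congr' ?_
  filter_upwards [eventually_gt_atTop (-gl)] with x hx
  exact (loadEigenvalue_eq_inv (neg_lt_iff_pos_add.1 hx).ne').symm

end LoadEigenvalue

/-- Properties of `λ̃(x) = (E·g_l)²·(g_l − x)/(x + g_l)³` on `[g_l, ∞)`: it coincides with
`v(x)² − 2·v(x)²·x/(x+g_l)` where `v(x) = E·g_l/(x+g_l)`, is strictly decreasing on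
`[g_l, 2g_l]`, strictly increasing on `[2g_l, ∞)`, vanishes at `g_l`, tends to `0` at `∞`,
and attains its minimum over `[g_l, ∞)` at `x = 2g_l` with value `−E²/27`. -/
theorem stmt_17 (E gl : ℝ) (hE : 0 < E) (hgl : 0 < gl) :
    (∀ x : ℝ, gl ≤ x →
      (E * gl) ^ 2 * (gl - x) / (x + gl) ^ 3 =
        (E * gl / (x + gl)) ^ 2 - 2 * (E * gl / (x + gl)) ^ 2 * x / (x + gl)) ∧
    StrictAntiOn (fun x : ℝ => (E * gl) ^ 2 * (gl - x) / (x + gl) ^ 3)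
      (Set.Icc gl (2 * gl)) ∧
    StrictMonoOn (fun x : ℝ => (E * gl) ^ 2 * (gl - x) / (x + gl) ^ 3)
      (Set.Ici (2 * gl)) ∧
    (E * gl) ^ 2 * (gl - gl) / (gl + gl) ^ 3 = 0 ∧
    Filter.Tendsto (fun x : ℝ => (E * gl) ^ 2 * (gl - x) / (x + gl) ^ 3)
      Filter.atTop (nhds 0) ∧
    (∀ x : ℝ, gl ≤ x →
      (E * gl) ^ 2 * (gl - 2 * gl) / (2 * gl + gl) ^ 3 ≤
        (E * gl) ^ 2 * (gl - x) / (x + gl) ^ 3) ∧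
    (E * gl) ^ 2 * (gl - 2 * gl) / (2 * gl + gl) ^ 3 = -E ^ 2 / 27 := by
  have neg_lt : ∀ {x : ℝ}, gl ≤ x → -gl < x := (neg_lt_self hgl).trans_le
  refine ⟨fun x hx => ?voltage_form, ?antitone, strictMonoOn_loadEigenvalue hE.ne' hgl,
    loadEigenvalue_self E gl, tendsto_loadEigenvalue_atTop E gl,
    fun x hx => isMinOn_loadEigenvalue hgl (neg_lt hx), loadEigenvalue_two_mul hgl.ne'⟩
  case voltage_form =>
    exact loadEigenvalue_eq_loadVoltage (neg_lt_iff_pos_add.1 (neg_lt hx)).ne'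
  case antitone =>
    exact (strictAntiOn_loadEigenvalue hE.ne').mono fun x hx => ⟨neg_lt hx.1, hx.2⟩
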